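/- Let {X(λ)} be a *-resolution of the identity with sup‖X(λ)‖ = 1 and set Φ(λ) = (X(λ)*X(λ))^{1/2}. Then sup_λ ‖Φ(λ)‖ = 1, Φ(λ) ≤ Φ(μ) for λ < μ, Φ(λ)ξ → 0 strongly as λ → −∞, Φ(λ)ξ → ξ strongly as λ → +∞, and Φ is strongly right-continuous. -/

import Mathlib

open Filter Topology

lemma strong_apply_aux {ι H : Type*} [NormedAddCommGroup H] [InnerProductSpace ℂ H]
    {f : Filter ι} {T : ι → H →L[ℂ] H} {T0 : H →L[ℂ] H} (hT : ∀ i, ‖T i‖ ≤ 1)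
    (h : ∀ y, Tendsto (fun i => T i y) f (𝓝 (T0 y))) {y : ι → H} {y0 : H}
    (hy : Tendsto y f (𝓝 y0)) : Tendsto (fun i => T i (y i)) f (𝓝 (T0 y0)) := by
  have h1 : Tendsto (fun i => T i (y i - y0)) f (𝓝 0) := by
    have h2 : Tendsto (fun i => ‖y i - y0‖) f (𝓝 0) :=
      tendsto_iff_norm_sub_tendsto_zero.1 hy
    refine squeeze_zero_norm (fun i => ?_) h2
    calc ‖T i (y i - y0)‖ ≤ ‖T i‖ * ‖y i - y0‖ := (T i).le_opNorm _
      _ ≤ 1 * ‖y i - y0‖ := by gcongr; exact hT i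
      _ = _ := one_mul _
  have h3 := h1.add (h y0)
  simpa using h3

lemma strong_poly_aux {ι H : Type*} [NormedAddCommGroup H] [InnerProductSpace ℂ H]
    {f : Filter ι} {T : ι → H →L[ℂ] H} {T0 : H →L[ℂ] H} (hT : ∀ i, ‖T i‖ ≤ 1)
    (h : ∀ y, Tendsto (fun i => T i y) f (𝓝 (T0 y))) (p : Polynomial ℝ) (ξ : H) :
    Tendsto (fun i => (Polynomial.aeval (T i) p) ξ) f (𝓝 ((Polynomial.aeval T0 p) ξ)) := by
  induction p using Polynomial.induction_on' with
  | add p q hp hq => simpa using hp.add hq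
  | monomial n a =>
    simp only [Polynomial.aeval_monomial, ← Algebra.smul_def, smul_apply]
    refine Tendsto.const_smul ?_ a
    induction n with
    | zero => simpa using tendsto_const_nhds
    | succ n ih =>
      simp only [pow_succ', mul_apply_eq_comp]
      exact strong_apply_aux hT h ih

lemma poly_near_aux {H : Type*} [NormedAddCommGroup H] [InnerProductSpace ℂ H] [CompleteSpace H]
    (A : H →L[ℂ] H) (hA : A.IsPositive) (hn : ‖A‖ ≤ 1) (p : Polynomial ℝ) (ε : ℝ) (hε : 0 ≤ ε)
    (hp : ∀ x ∈ Set.Icc (0 : ℝ) 1, |p.eval x - √x| ≤ ε) :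
    ‖Polynomial.aeval (A * A) p - A‖ ≤ ε := by
  have hA0 : 0 ≤ A := (ContinuousLinearMap.nonneg_iff_isPositive A).2 hA
  have hsa : IsSelfAdjoint A := hA.isSelfAdjoint
  have e : Polynomial.aeval (A * A) p - A
      = cfc (fun x => (p.comp (Polynomial.X ^ 2) - Polynomial.X).eval x) A := by
    rw [cfc_polynomial _ A hsa]
    simp [Polynomial.aeval_comp, pow_two]
  rw [e]
  refine norm_cfc_le hε (fun x hx => ?_)
  have hx0 : 0 ≤ x := spectrum_nonneg_of_nonneg hA0 hx
  have hx1 : x ≤ 1 := by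
    have h1 := spectrum.norm_le_norm_mul_of_mem hx
    have h2 : ‖(1 : H →L[ℂ] H)‖ ≤ 1 := ContinuousLinearMap.norm_id_le
    exact (le_abs_self x).trans (h1.trans (mul_le_one₀ hn (norm_nonneg _) h2))
  have := hp (x ^ 2) ⟨by positivity, by nlinarith⟩
  rw [Real.sqrt_sq hx0] at this
  simpa using this

lemma strong_sqrt_aux {ι H : Type*} [NormedAddCommGroup H] [InnerProductSpace ℂ H]
    [CompleteSpace H] {f : Filter ι} {A : ι → H →L[ℂ] H} {B : H →L[ℂ] H}
    (hA : ∀ i, (A i).IsPositive) (hn : ∀ i, ‖A i‖ ≤ 1) (hB : B.IsPositive) (hBn : ‖B‖ ≤ 1)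
    (h : ∀ y, Tendsto (fun i => (A i * A i) y) f (𝓝 ((B * B) y))) (ξ : H) :
    Tendsto (fun i => A i ξ) f (𝓝 (B ξ)) := by
  rw [Metric.tendsto_nhds]
  intro ε hε
  set δ := ε / (3 * (‖ξ‖ + 1)) with hδ
  have hδ0 : 0 < δ := by positivity
  have hδξ : δ * ‖ξ‖ < ε / 3 := by
    rw [hδ, div_mul_eq_mul_div, div_lt_div_iff₀ (by positivity) (by norm_num)]
    nlinarith [norm_nonneg ξ]
  obtain ⟨p, hp⟩ := exists_polynomial_near_of_continuousOn 0 1 (fun x => √x)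
    Real.continuous_sqrt.continuousOn δ hδ0
  have hp' : ∀ x ∈ Set.Icc (0 : ℝ) 1, |p.eval x - √x| ≤ δ := fun x hx => (hp x hx).le
  have hAA : ∀ i, ‖A i * A i‖ ≤ 1 := fun i =>
    (norm_mul_le _ _).trans (mul_le_one₀ (hn i) (norm_nonneg _) (hn i))
  have key := strong_poly_aux hAA h p ξ
  rw [Metric.tendsto_nhds] at key
  filter_upwards [key (ε / 3) (by positivity)] with i hi
  have b1 : ‖(Polynomial.aeval (A i * A i) p - A i) ξ‖ ≤ δ * ‖ξ‖ :=
    ContinuousLinearMap.le_of_opNorm_le _ (poly_near_aux _ (hA i) (hn i) p δ hδ0.le hp') ξ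
  have b2 : ‖(Polynomial.aeval (B * B) p - B) ξ‖ ≤ δ * ‖ξ‖ :=
    ContinuousLinearMap.le_of_opNorm_le _ (poly_near_aux _ hB hBn p δ hδ0.le hp') ξ
  rw [dist_eq_norm] at hi ⊢
  rw [sub_apply] at b1 b2
  have e : A i ξ - B ξ = -((Polynomial.aeval (A i * A i) p) ξ - A i ξ)
      + ((Polynomial.aeval (A i * A i) p) ξ - (Polynomial.aeval (B * B) p) ξ)
      + ((Polynomial.aeval (B * B) p) ξ - B ξ) := by abel
  rw [e]
  refine (norm_add₃_le).trans_lt ?_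
  rw [norm_neg]
  linarith

/-- For a *-resolution of the identity with `sup‖X(λ)‖ = 1`, the family
`Φ(λ) = (X(λ)*X(λ))^{1/2}` satisfies: `sup_λ ‖Φ(λ)‖ = 1`, `Φ(λ) ≤ Φ(μ)` for `λ < μ`,
`Φ(λ)ξ → 0` strongly as `λ → −∞`, `Φ(λ)ξ → ξ` strongly as `λ → +∞`, and `Φ` is strongly
right-continuous.  (The square root `Φ(λ)` is characterized as the unique positive operator
with `Φ(λ)² = F(λ)`.) -/
theorem star_resolution_Phi_properties
    {H : Type*} [NormedAddCommGroup H] [InnerProductSpace ℂ H] [CompleteSpace H]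
    (X : ℝ → H →L[ℂ] H)
    (hnorm : (⨆ l : ℝ, ‖X l‖) = 1)
    (hmul : ∀ l m : ℝ, l < m → (X l).comp (X m) = X l ∧ (X m).comp (X l) = X l)
    (hbot : ∀ ξ : H, Tendsto (fun l => X l ξ) atBot (𝓝 0))
    (htop : ∀ ξ : H, Tendsto (fun l => X l ξ) atTop (𝓝 ξ))
    (hrc : ∀ (l : ℝ) (ξ : H), Tendsto (fun m => X m ξ) (𝓝[>] l) (𝓝 (X l ξ)))
    (hbotS : ∀ ξ : H, Tendsto (fun l => ContinuousLinearMap.adjoint (X l) ξ) atBot (𝓝 0))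
    (htopS : ∀ ξ : H, Tendsto (fun l => ContinuousLinearMap.adjoint (X l) ξ) atTop (𝓝 ξ))
    (hrcS : ∀ (l : ℝ) (ξ : H), Tendsto (fun m => ContinuousLinearMap.adjoint (X m) ξ)
      (𝓝[>] l) (𝓝 (ContinuousLinearMap.adjoint (X l) ξ)))
    (F : ℝ → H →L[ℂ] H)
    (hF : ∀ l, F l = (ContinuousLinearMap.adjoint (X l)).comp (X l))
    (Phi : ℝ → H →L[ℂ] H)
    (hPhipos : ∀ l, (Phi l).IsPositive)
    (hPhisq : ∀ l, (Phi l).comp (Phi l) = F l) :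
    (⨆ l : ℝ, ‖Phi l‖) = 1 ∧
    (∀ l m : ℝ, l < m → (Phi m - Phi l).IsPositive) ∧
    (∀ ξ : H, Tendsto (fun l => Phi l ξ) atBot (𝓝 0)) ∧
    (∀ ξ : H, Tendsto (fun l => Phi l ξ) atTop (𝓝 ξ)) ∧
    (∀ (l : ℝ) (ξ : H), Tendsto (fun m => Phi m ξ) (𝓝[>] l) (𝓝 (Phi l ξ))) := by
  have hbdd : BddAbove (Set.range fun l => ‖X l‖) := by
    by_contra hc
    rw [Real.iSup_of_not_bddAbove hc] at hnorm
    exact zero_ne_one hnorm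
  have hX1 : ∀ l, ‖X l‖ ≤ 1 := fun l => hnorm ▸ le_ciSup hbdd l
  have hsq : ∀ l, Phi l * Phi l = ContinuousLinearMap.adjoint (X l) * X l := fun l =>
    (hPhisq l).trans (hF l)
  have hsa : ∀ l, ContinuousLinearMap.adjoint (Phi l) = Phi l := fun l =>
    (hPhipos l).isSelfAdjoint.adjoint_eq
  have hap : ∀ l ξ, ‖Phi l ξ‖ = ‖X l ξ‖ := by
    intro l ξ
    have h1 : ‖Phi l ξ‖ ^ 2 = ‖X l ξ‖ ^ 2 := by
      rw [ContinuousLinearMap.apply_norm_sq_eq_inner_adjoint_left,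
        ContinuousLinearMap.apply_norm_sq_eq_inner_adjoint_left, hsa]
      exact congrArg (fun T : H →L[ℂ] H => RCLike.re (inner ℂ (T ξ) ξ)) (hsq l)
    exact (sq_eq_sq₀ (norm_nonneg _) (norm_nonneg _)).1 h1
  have hnn : ∀ l, ‖Phi l‖ = ‖X l‖ := by
    intro l
    apply le_antisymm
    · exact ContinuousLinearMap.opNorm_le_bound _ (norm_nonneg _)
        fun ξ => (hap l ξ).trans_le ((X l).le_opNorm ξ)
    · exact ContinuousLinearMap.opNorm_le_bound _ (norm_nonneg _)
        fun ξ => (hap l ξ).symm.trans_le ((Phi l).le_opNorm ξ)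
  have hP1 : ∀ l, ‖Phi l‖ ≤ 1 := fun l => (hnn l).trans_le (hX1 l)
  have hXS1 : ∀ l, ‖ContinuousLinearMap.adjoint (X l)‖ ≤ 1 := fun l => by
    rw [LinearIsometryEquiv.norm_map]; exact hX1 l
  refine ⟨by simp only [hnn]; exact hnorm, ?_, ?_, ?_, ?_⟩
  · intro l m hlm
    have hle : Phi l * Phi l ≤ Phi m * Phi m := by
      rw [ContinuousLinearMap.le_def]
      have hpos : ∀ k, (Phi k * Phi k).IsPositive := fun k => by
        rw [hsq k]; exact ContinuousLinearMap.isPositive_adjoint_comp_self (X k)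
      refine (ContinuousLinearMap.isPositive_iff' _).2 ⟨(hpos m).isSelfAdjoint.sub (hpos l).isSelfAdjoint, fun x => ?_⟩
      have hq : ∀ k, inner ℂ ((Phi k * Phi k) x) x = ((‖X k x‖ ^ 2 : ℝ) : ℂ) := fun k => by
        rw [hsq k, mul_apply_eq_comp, ContinuousLinearMap.adjoint_inner_left,
          inner_self_eq_norm_sq_to_K]
        simp
      rw [sub_apply, inner_sub_left, hq, hq, ← Complex.ofReal_sub]
      have hx : ‖X l x‖ ≤ ‖X m x‖ := by
        have h1 : X l x = X l (X m x) := by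
          conv_lhs => rw [← (hmul l m hlm).1]
          rfl
        rw [h1]
        calc ‖X l (X m x)‖ ≤ ‖X l‖ * ‖X m x‖ := (X l).le_opNorm _
          _ ≤ 1 * ‖X m x‖ := by gcongr; exact hX1 l
          _ = _ := one_mul _
      have : (0:ℝ) ≤ ‖X m x‖ ^ 2 - ‖X l x‖ ^ 2 := by
        have := pow_le_pow_left₀ (norm_nonneg _) hx 2
        linarith
      exact_mod_cast this
    have h2 := CFC.sqrt_le_sqrt _ _ hle
    rw [CFC.sqrt_mul_self _ ((ContinuousLinearMap.nonneg_iff_isPositive _).2 (hPhipos l)),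
      CFC.sqrt_mul_self _ ((ContinuousLinearMap.nonneg_iff_isPositive _).2 (hPhipos m))] at h2
    exact (ContinuousLinearMap.le_def _ _).1 h2
  · intro ξ
    rw [tendsto_zero_iff_norm_tendsto_zero]
    simp only [hap]
    exact tendsto_zero_iff_norm_tendsto_zero.1 (hbot ξ)
  · intro ξ
    refine strong_sqrt_aux (B := 1) hPhipos hP1 ContinuousLinearMap.isPositive_one ContinuousLinearMap.norm_id_le (fun y => ?_) ξ
    simp only [hsq]
    exact strong_apply_aux (T0 := 1) hXS1 htopS (htop y)
  · intro l ξ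
    refine strong_sqrt_aux hPhipos hP1 (hPhipos l) (hP1 l) (fun y => ?_) ξ
    simp only [hsq]
    exact strong_apply_aux hXS1 (hrcS l) (hrc l y)
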